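/- Let α > 1 with α ∉ ℚ ∪ ℚ₂, let h₀ ≥ 1 be an integer, and define Ŵ = ([−⌈h₀^α⌉, ⌈h₀^α⌉] × [0, h₀]) ∪ {x ∈ ℍ : |x₁| ≥ ⌈h₀^α⌉, x₂ ≤ |x₁|^{1/α}} and ξ₀ = (0, h₀). Set β = 4/(α+3), γ = 2(α−1)/(α+3), α₁ = β + γ, k₀ = max(min{k : 2^{βk} > 2h₀}, 2⌈(α+3)/(α−1)⌉, ⌈3/(α₁−1)⌉), k_i = k₀ + i for i ≥ 0, and s_i = {(y₁, 2^{k_i}) ∈ ℤ² : |y₁| ≤ Σ_{j=1}^{i} 2^{(1+γ)k_j}} (with s_0 = {(0, 2^{k₀})}). Then there exists a constant c > 0 such that for every i ≥ 0, the simple random walk started at ξ₀ satisfies P_{ξ₀}(τ_{s_i} < τ_{Ŵ}) ≥ c · 2^{−k_i}. -/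

import Mathlib

open Filter

namespace SHM

/-- The upper half planar lattice `ℍ = {(x₁,x₂) ∈ ℤ² : x₂ ≥ 0}` (including the x-axis). -/
def upperH : Set (ℤ × ℤ) := {p | 0 ≤ p.2}

/-- The horizontal line `L_n = {(x,n) : x ∈ ℤ}` of height `n`. -/
def lineH (n : ℤ) : Set (ℤ × ℤ) := {p | p.2 = n}

/-- The four unit steps of the planar simple random walk. -/
def dirs : Finset (ℤ × ℤ) := {(1,0), (-1,0), (0,1), (0,-1)}

/-- The position after `m` steps of the walk started at `z` whose first `n`
increments are given by `σ`. -/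
def pos (z : ℤ × ℤ) {n : ℕ} (σ : Fin n → ℤ × ℤ) (m : ℕ) : ℤ × ℤ :=
  z + ∑ i ∈ Finset.univ.filter (fun i : Fin n => (i : ℕ) < m), σ i

/-- The probability that the first `n` increments of the simple random walk
(each uniform on the four unit vectors) satisfy the predicate `E`. -/
noncomputable def stepProb (n : ℕ) (E : (Fin n → ℤ × ℤ) → Prop) : ℝ :=
  (Nat.card {σ : Fin n → ↥dirs // E fun i => ((σ i : ℤ × ℤ))} : ℝ) / 4 ^ n

/-- `P_z(S_{τ̄_A} = x)` : the walk started at `z` hits `A` (in finite time) for the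
first time precisely at the point `x`.  Here `τ̄_A = min {m ≥ 0 : S_m ∈ A}`. -/
noncomputable def hitProb (z : ℤ × ℤ) (A : Set (ℤ × ℤ)) (x : ℤ × ℤ) : ℝ :=
  ∑' n : ℕ, stepProb n fun σ =>
    pos z σ n = x ∧ x ∈ A ∧ ∀ m < n, pos z σ m ∉ A

/-- `P_z(τ̄_A < τ̄_B)` : the walk started at `z` hits `A` strictly before hitting `B`. -/
noncomputable def hitBeforeProb (z : ℤ × ℤ) (A B : Set (ℤ × ℤ)) : ℝ :=
  ∑' n : ℕ, stepProb n fun σ =>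
    pos z σ n ∈ A ∧ pos z σ n ∉ B ∧ ∀ m < n, pos z σ m ∉ A ∧ pos z σ m ∉ B

/-- The stationary harmonic measure `H_{B,N}(x) = Σ_{z ∈ L_N \ B} P_z(S_{τ̄_{B ∪ L₀}} = x)`. -/
noncomputable def harm (B : Set (ℤ × ℤ)) (N : ℕ) (x : ℤ × ℤ) : ℝ :=
  ∑' z : ↥(lineH (N : ℤ) \ B), hitProb (z : ℤ × ℤ) (B ∪ lineH 0) x

/-- `ℚ₁ = {log n₁ / log n₂ : n₁, n₂ ∈ ℤ, n₁, n₂ ≥ 2}`. -/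
def Q1 : Set ℝ := {r | ∃ n₁ n₂ : ℤ, 2 ≤ n₁ ∧ 2 ≤ n₂ ∧ r = Real.log n₁ / Real.log n₂}

/-- `ℚ₂ = {(b − dx)/(cx − a) ∈ ℝ : x ∈ ℚ₁, a, b, c, d ∈ ℤ}`. -/
def Q2 : Set ℝ :=
  {r | ∃ x ∈ Q1, ∃ a b c d : ℤ, (c : ℝ) * x - a ≠ 0 ∧ r = ((b : ℝ) - d * x) / ((c : ℝ) * x - a)}

/-- The box `D₀ = [−⌈h₀^α⌉, ⌈h₀^α⌉] × [0, h₀]`. -/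
def boxD₀ (α : ℝ) (h₀ : ℤ) : Set (ℤ × ℤ) :=
  {x | |x.1| ≤ ⌈(h₀ : ℝ) ^ α⌉ ∧ 0 ≤ x.2 ∧ x.2 ≤ h₀}

/-- The region `U_{h₀} = {x ∈ ℍ : |x₁| ≥ ⌈h₀^α⌉, x₂ ≤ |x₁|^{1/α}}`. -/
def regionU (α : ℝ) (h₀ : ℤ) : Set (ℤ × ℤ) :=
  {x ∈ upperH | ⌈(h₀ : ℝ) ^ α⌉ ≤ |x.1| ∧ (x.2 : ℝ) ≤ |(x.1 : ℝ)| ^ (1 / α)}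

/-- `Ŵ = D₀ ∪ U_{h₀}`. -/
def What (α : ℝ) (h₀ : ℤ) : Set (ℤ × ℤ) := boxD₀ α h₀ ∪ regionU α h₀

/-- The middle section `s_i = {(y₁, 2^{k_i}) : |y₁| ≤ Σ_{j=1}^{i} 2^{(1+γ)k_j}}`
at height `2^{k_i}` with `k_i = k₀ + i` (so `s_0 = {(0, 2^{k₀})}`). -/
def midSec (γ : ℝ) (k₀ i : ℕ) : Set (ℤ × ℤ) :=
  {y | y.2 = (2 : ℤ) ^ (k₀ + i) ∧
       |(y.1 : ℝ)| ≤ ∑ j ∈ Finset.Icc 1 i, (2 : ℝ) ^ ((1 + γ) * ((k₀ + j : ℕ) : ℝ))}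

/-- `P_z(τ_A < τ_B)` : the walk started at `z` hits `A` strictly before `B`, where
`τ_A = min {m ≥ 1 : S_m ∈ A}` denotes exit (positive-time hitting) times. -/
noncomputable def exitBeforeProb (z : ℤ × ℤ) (A B : Set (ℤ × ℤ)) : ℝ :=
  ∑' n : ℕ, stepProb n fun σ =>
    0 < n ∧ pos z σ n ∈ A ∧ pos z σ n ∉ B ∧
      ∀ m, 0 < m → m < n → pos z σ m ∉ A ∧ pos z σ m ∉ B

/-!
Everything is compared with functions that are sub- or superharmonic for the walk. The cubic
`y³ - 3x²y` is discrete harmonic, which yields a harmonic function on the box `[-H, H] × [0, H]`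
that is at most `y`, vanishes or is negative on the lower and lateral sides, and is of order `y` on
the axis. The obstacle `Ŵ` lies below the curve `y = h₀ + |x| ^ (1 / α)` with `1 / α < 1`, and a
weighted sum over the dyadic scales `N = 2 ^ k` of superharmonic barriers, each equal to `1` at
horizontal distance at least `N` and at most `2y / N` on the axis, dominates that curve while being
sublinear along the axis. Subtracting one from the other gives a subharmonic minorant of `H` times
the hitting probability, so that from a fixed large height `M` the walk reaches the segment
`[-H, H] × {H}` before `Ŵ` with probability at least `M / (4H)`. The walk climbs straight from
`ξ₀` to height `M` with a probability independent of `i`.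
-/

/-! ### Harmonicity of hitting probabilities -/

/-- The transition operator of the simple random walk: `stepMean u z` is the mean of `u` over the
four neighbours of `z`, so `u` is superharmonic when `stepMean u ≤ u`. -/
noncomputable def stepMean : (ℤ × ℤ → ℝ) →ₗ[ℝ] (ℤ × ℤ → ℝ) where
  toFun u z := (∑ d ∈ dirs, u (z + d)) / 4
  map_add' u v := by ext z; simp [Finset.sum_add_distrib, add_div]
  map_smul' c u := by ext z; simp [← Finset.mul_sum, mul_div_assoc]

lemma stepMean_apply (u : ℤ × ℤ → ℝ) (z : ℤ × ℤ) :
    stepMean u z = (∑ d ∈ dirs, u (z + d)) / 4 := rfl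

lemma stepMean_apply_eq (u : ℤ × ℤ → ℝ) (z : ℤ × ℤ) :
    stepMean u z = (u (z + (1, 0)) + u (z + (-1, 0)) + u (z + (0, 1)) + u (z + (0, -1))) / 4 := by
  simp [stepMean_apply, dirs, add_assoc]

lemma stepMean_const (c : ℝ) : stepMean (Function.const _ c) = Function.const _ c := by
  ext z
  simp only [stepMean_apply_eq, Function.const_apply]
  ring

lemma stepMean_apply_le {u v : ℤ × ℤ → ℝ} {z : ℤ × ℤ} (h : ∀ d ∈ dirs, u (z + d) ≤ v (z + d)) :
    stepMean u z ≤ stepMean v z :=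
  div_le_div_of_nonneg_right (Finset.sum_le_sum h) (by norm_num)

lemma div_four_le_stepMean {u : ℤ × ℤ → ℝ} (hu : 0 ≤ u) (z : ℤ × ℤ) {d : ℤ × ℤ} (hd : d ∈ dirs) :
    u (z + d) / 4 ≤ stepMean u z :=
  div_le_div_of_nonneg_right
    (Finset.single_le_sum (f := fun d => u (z + d)) (fun d _ => hu (z + d)) hd) (by norm_num)

lemma hasSum_stepMean {F : ℕ → ℤ × ℤ → ℝ} {u : ℤ × ℤ → ℝ}
    (h : ∀ z, HasSum (fun n => F n z) (u z)) (z : ℤ × ℤ) :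
    HasSum (fun n => stepMean (F n) z) (stepMean u z) :=
  (hasSum_sum fun d _ => h (z + d)).div_const 4

lemma pos_zero (z : ℤ × ℤ) {n : ℕ} (σ : Fin n → ℤ × ℤ) : pos z σ 0 = z := by
  simp [pos]

lemma pos_cons_succ (z d : ℤ × ℤ) {n : ℕ} (σ : Fin n → ℤ × ℤ) (m : ℕ) :
    pos z (Fin.cons d σ : Fin (n + 1) → ℤ × ℤ) (m + 1) = pos (z + d) σ m := by
  simp [pos, Finset.sum_filter, Fin.sum_univ_succ, add_assoc]

lemma stepProb_nonneg (n : ℕ) (E : (Fin n → ℤ × ℤ) → Prop) : 0 ≤ stepProb n E := by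
  unfold stepProb
  positivity

lemma stepProb_eq_zero {n : ℕ} {E : (Fin n → ℤ × ℤ) → Prop} (h : ∀ σ, ¬ E σ) :
    stepProb n E = 0 := by
  simp [stepProb, h]

lemma stepProb_succ (n : ℕ) (E : (Fin (n + 1) → ℤ × ℤ) → Prop) :
    stepProb (n + 1) E = (∑ d ∈ dirs, stepProb n fun σ => E (Fin.cons d σ)) / 4 := by
  have hcard : Nat.card {σ : Fin (n + 1) → dirs // E fun i => σ i} =
      ∑ d : dirs, Nat.card {σ : Fin n → dirs // E (Fin.cons d fun i => σ i)} := by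
    rw [← Nat.card_sigma]
    refine Nat.card_congr <| ((Fin.consEquiv fun _ => dirs).symm.subtypeEquiv fun σ => ?_).trans <|
      Equiv.subtypeProdEquivSigmaSubtype fun (d : dirs) (τ : Fin n → dirs) =>
        E (Fin.cons d fun i => τ i)
    refine iff_of_eq (congrArg E (funext fun i => ?_))
    cases i using Fin.cases <;> rfl
  rw [← Finset.sum_coe_sort]
  simp only [stepProb, hcard, ← Finset.sum_div, pow_succ, div_div, Nat.cast_sum]

/-- The probability that the walk started at `z` enters `A ∪ B` for the first time at time `n`, at a
point of `A \ B`; this is the `n`-th term of the series defining `hitBeforeProb z A B`. -/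
noncomputable def firstHitProb (A B : Set (ℤ × ℤ)) (n : ℕ) (z : ℤ × ℤ) : ℝ :=
  stepProb n fun σ =>
    pos z σ n ∈ A ∧ pos z σ n ∉ B ∧ ∀ m < n, pos z σ m ∉ A ∧ pos z σ m ∉ B

section HittingProbabilities

variable {A B : Set (ℤ × ℤ)} {z : ℤ × ℤ}

lemma hitBeforeProb_eq_tsum (A B : Set (ℤ × ℤ)) (z : ℤ × ℤ) :
    hitBeforeProb z A B = ∑' n, firstHitProb A B n z := rfl

lemma firstHitProb_nonneg (A B : Set (ℤ × ℤ)) (n : ℕ) (z : ℤ × ℤ) : 0 ≤ firstHitProb A B n z :=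
  stepProb_nonneg _ _

lemma firstHitProb_zero_of_mem (hA : z ∈ A) (hB : z ∉ B) : firstHitProb A B 0 z = 1 := by
  simp [firstHitProb, stepProb, pos_zero, hA, hB]

lemma firstHitProb_zero_of_notMem (h : z ∉ A ∨ z ∈ B) : firstHitProb A B 0 z = 0 :=
  stepProb_eq_zero fun σ => by rw [pos_zero]; tauto

lemma firstHitProb_succ_of_mem (n : ℕ) (h : z ∈ A ∨ z ∈ B) : firstHitProb A B (n + 1) z = 0 :=
  stepProb_eq_zero fun σ ⟨_, _, havoid⟩ => by
    have h0 := havoid 0 n.succ_pos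
    rw [pos_zero] at h0
    tauto

lemma firstHitProb_succ (n : ℕ) (hA : z ∉ A) (hB : z ∉ B) :
    firstHitProb A B (n + 1) z = stepMean (firstHitProb A B n) z := by
  simp only [firstHitProb, stepMean_apply, stepProb_succ, Nat.forall_lt_succ_left, pos_zero,
    pos_cons_succ, hA, hB, not_false_eq_true, true_and]

lemma sum_range_firstHitProb_le_one (A B : Set (ℤ × ℤ)) (N : ℕ) (z : ℤ × ℤ) :
    ∑ n ∈ Finset.range N, firstHitProb A B n z ≤ 1 := by
  induction N generalizing z with
  | zero => simp
  | succ N ih =>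
    rw [Finset.sum_range_succ']
    by_cases h : z ∈ A ∨ z ∈ B
    · rw [Finset.sum_eq_zero fun n _ => firstHitProb_succ_of_mem n h, zero_add]
      by_cases hAB : z ∈ A ∧ z ∉ B
      · rw [firstHitProb_zero_of_mem hAB.1 hAB.2]
      · rw [firstHitProb_zero_of_notMem (by tauto)]
        exact zero_le_one
    · push Not at h
      calc ∑ n ∈ Finset.range N, firstHitProb A B (n + 1) z + firstHitProb A B 0 z
          = stepMean (∑ n ∈ Finset.range N, firstHitProb A B n) z := by
            simp only [firstHitProb_succ _ h.1 h.2, firstHitProb_zero_of_notMem (Or.inl h.1),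
              add_zero, map_sum, Finset.sum_apply]
        _ ≤ stepMean (Function.const _ 1) z :=
            stepMean_apply_le fun d _ => by simpa using ih (z + d)
        _ = 1 := by rw [stepMean_const, Function.const_apply]

lemma summable_firstHitProb (A B : Set (ℤ × ℤ)) (z : ℤ × ℤ) :
    Summable fun n => firstHitProb A B n z :=
  summable_of_sum_range_le (fun n => firstHitProb_nonneg A B n z)
    fun N => sum_range_firstHitProb_le_one A B N z

lemma hitBeforeProb_nonneg (A B : Set (ℤ × ℤ)) (z : ℤ × ℤ) : 0 ≤ hitBeforeProb z A B :=
  tsum_nonneg fun n => firstHitProb_nonneg A B n z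

lemma hitBeforeProb_le_one (A B : Set (ℤ × ℤ)) (z : ℤ × ℤ) : hitBeforeProb z A B ≤ 1 :=
  Real.tsum_le_of_sum_range_le (fun n => firstHitProb_nonneg A B n z)
    fun N => sum_range_firstHitProb_le_one A B N z

lemma hitBeforeProb_of_mem (hA : z ∈ A) (hB : z ∉ B) : hitBeforeProb z A B = 1 := by
  rw [hitBeforeProb_eq_tsum, (summable_firstHitProb A B z).tsum_eq_zero_add,
    firstHitProb_zero_of_mem hA hB]
  simp [firstHitProb_succ_of_mem _ (Or.inl hA : z ∈ A ∨ z ∈ B)]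

lemma hasSum_stepMean_firstHitProb (A B : Set (ℤ × ℤ)) (z : ℤ × ℤ) :
    HasSum (fun n => stepMean (firstHitProb A B n) z)
      (stepMean (fun w => hitBeforeProb w A B) z) :=
  hasSum_stepMean (fun w => (summable_firstHitProb A B w).hasSum) z

lemma stepMean_hitBeforeProb (hA : z ∉ A) (hB : z ∉ B) :
    stepMean (fun w => hitBeforeProb w A B) z = hitBeforeProb z A B := by
  rw [hitBeforeProb_eq_tsum, (summable_firstHitProb A B z).tsum_eq_zero_add,
    firstHitProb_zero_of_notMem (Or.inl hA), zero_add]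
  simp only [firstHitProb_succ _ hA hB]
  exact (hasSum_stepMean_firstHitProb A B z).tsum_eq.symm

lemma exitBeforeProb_eq_stepMean (A B : Set (ℤ × ℤ)) (z : ℤ × ℤ) :
    exitBeforeProb z A B = stepMean (fun w => hitBeforeProb w A B) z := by
  let exitProb : ℕ → ℝ := fun n => stepProb n fun σ =>
    0 < n ∧ pos z σ n ∈ A ∧ pos z σ n ∉ B ∧
      ∀ m, 0 < m → m < n → pos z σ m ∉ A ∧ pos z σ m ∉ B
  have hzero : exitProb 0 = 0 := stepProb_eq_zero fun _ h => lt_irrefl 0 h.1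
  have hshift (n : ℕ) (P : ℕ → Prop) :
      (∀ m, 0 < m → m < n + 1 → P m) ↔ ∀ m < n, P (m + 1) := by
    refine ⟨fun h m hm => h (m + 1) m.succ_pos (Nat.succ_lt_succ hm), fun h m hm0 hm => ?_⟩
    obtain ⟨m, rfl⟩ := Nat.exists_eq_add_one.2 hm0
    exact h m (Nat.lt_of_succ_lt_succ hm)
  have hsucc (n : ℕ) : exitProb (n + 1) = stepMean (firstHitProb A B n) z := by
    simp only [exitProb, firstHitProb, stepMean_apply, stepProb_succ, hshift, pos_cons_succ,
      n.succ_pos, true_and]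
  have hsum : HasSum (fun n => exitProb (n + 1)) (stepMean (fun w => hitBeforeProb w A B) z) := by
    simpa only [hsucc] using hasSum_stepMean_firstHitProb A B z
  calc exitBeforeProb z A B = ∑' n, exitProb n := rfl
    _ = stepMean (fun w => hitBeforeProb w A B) z := by
      rw [((summable_nat_add_iff 1).1 hsum.summable).tsum_eq_zero_add, hzero, zero_add,
        hsum.tsum_eq]

lemma hitBeforeProb_add_div_four_le {d : ℤ × ℤ} (hd : d ∈ dirs) (hB : z ∉ B) :
    hitBeforeProb (z + d) A B / 4 ≤ hitBeforeProb z A B := by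
  by_cases hA : z ∈ A
  · rw [hitBeforeProb_of_mem hA hB]
    linarith [hitBeforeProb_le_one A B (z + d)]
  · rw [← stepMean_hitBeforeProb hA hB]
    exact div_four_le_stepMean (hitBeforeProb_nonneg A B) z hd

lemma hitBeforeProb_add_nsmul_div_le {d : ℤ × ℤ} (hd : d ∈ dirs) (n : ℕ)
    (hB : ∀ m < n, z + m • d ∉ B) :
    hitBeforeProb (z + n • d) A B / 4 ^ n ≤ hitBeforeProb z A B := by
  induction n with
  | zero => simp
  | succ n ih =>
    calc hitBeforeProb (z + (n + 1) • d) A B / 4 ^ (n + 1)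
        = hitBeforeProb (z + n • d + d) A B / 4 / 4 ^ n := by
          rw [succ_nsmul, add_assoc, pow_succ', div_div]
      _ ≤ hitBeforeProb (z + n • d) A B / 4 ^ n := by
          gcongr
          exact hitBeforeProb_add_div_four_le hd (hB n n.lt_succ_self)
      _ ≤ hitBeforeProb z A B := ih fun m hm => hB m (hm.trans n.lt_succ_self)

lemma hitBeforeProb_add_nsmul_div_le_exitBeforeProb {d : ℤ × ℤ} (hd : d ∈ dirs) {n : ℕ}
    (hn : n ≠ 0) (hB : ∀ m, 0 < m → m < n → z + m • d ∉ B) :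
    hitBeforeProb (z + n • d) A B / 4 ^ n ≤ exitBeforeProb z A B := by
  obtain ⟨n, rfl⟩ := Nat.exists_eq_succ_of_ne_zero hn
  have hshift (m : ℕ) : z + (m + 1) • d = z + d + m • d := by rw [succ_nsmul', add_assoc]
  calc hitBeforeProb (z + (n + 1) • d) A B / 4 ^ (n + 1)
      = hitBeforeProb (z + d + n • d) A B / 4 ^ n / 4 := by rw [hshift, pow_succ, div_div]
    _ ≤ hitBeforeProb (z + d) A B / 4 := by
        gcongr
        exact hitBeforeProb_add_nsmul_div_le hd n fun m hm =>
          hshift m ▸ hB (m + 1) m.succ_pos (Nat.succ_lt_succ hm)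
    _ ≤ exitBeforeProb z A B := by
        rw [exitBeforeProb_eq_stepMean]
        exact div_four_le_stepMean (hitBeforeProb_nonneg A B) z hd

end HittingProbabilities

/-! ### The comparison principle -/

lemma nonpos_of_le_stepMean {D : Finset (ℤ × ℤ)} {w : ℤ × ℤ → ℝ}
    (hsub : ∀ z ∈ D, w z ≤ stepMean w z)
    (hbdry : ∀ z ∈ D, ∀ d ∈ dirs, z + d ∉ D → w (z + d) ≤ 0) :
    ∀ z ∈ D, w z ≤ 0 := by
  by_contra! ⟨z₀, hz₀, hw₀⟩
  -- The right neighbour of the rightmost maximizer of `w` on `D` has a strictly smaller value.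
  obtain ⟨z, hz, hmax⟩ := D.exists_max_image (fun z => toLex (w z, z.1)) ⟨z₀, hz₀⟩
  simp only [Prod.Lex.toLex_le_toLex] at hmax
  have hmax_le : ∀ v ∈ D, w v ≤ w z := fun v hv => (hmax v hv).elim le_of_lt fun h => h.1.le
  have hwz : 0 < w z := hw₀.trans_le (hmax_le z₀ hz₀)
  have hle : ∀ d ∈ dirs, w (z + d) ≤ w z := fun d hd => by
    by_cases h : z + d ∈ D
    · exact hmax_le _ h
    · exact (hbdry z hz d hd h).trans hwz.le
  have hlt : w (z + (1, 0)) < w z := by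
    by_cases h : z + (1, 0) ∈ D
    · exact (hmax _ h).resolve_right fun h => by simpa using h.2
    · exact (hbdry z hz _ (by simp [dirs]) h).trans_lt hwz
  have hmean := stepMean_apply_eq w z ▸ hsub z hz
  linarith [hle (-1, 0) (by simp [dirs]), hle (0, 1) (by simp [dirs]), hle (0, -1) (by simp [dirs])]

lemma le_of_le_stepMean_of_stepMean_le {D : Finset (ℤ × ℤ)} {f u : ℤ × ℤ → ℝ}
    (hf : ∀ z ∈ D, f z ≤ stepMean f z) (hu : ∀ z ∈ D, stepMean u z ≤ u z)
    (hbdry : ∀ z ∈ D, ∀ d ∈ dirs, z + d ∉ D → f (z + d) ≤ u (z + d)) :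
    ∀ z ∈ D, f z ≤ u z := by
  have hdiff : ∀ z ∈ D, (f - u) z ≤ 0 := by
    refine nonpos_of_le_stepMean (fun z hz => ?_) fun z hz d hd h => ?_
    · simpa only [map_sub, Pi.sub_apply] using sub_le_sub (hf z hz) (hu z hz)
    · simpa only [Pi.sub_apply, sub_nonpos] using hbdry z hz d hd h
  exact fun z hz => sub_nonpos.1 (hdiff z hz)

/-! ### Superharmonic barriers -/

/-- A superharmonic function on the upper half plane with values in `[0, 1]`, which is `1` outside
the triangle `|x| + y < N` and decays linearly towards the origin along the axis `x = 0`. It is the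
truncation at `1` of the discrete harmonic quadratic `1 + (x² - (N - y)²) / N²`, with `N - y`
replaced by its positive part. -/
noncomputable def barrier (N : ℕ) (z : ℤ × ℤ) : ℝ :=
  min 1 (1 + ((z.1 : ℝ) ^ 2 - max ((N : ℝ) - z.2) 0 ^ 2) / (N : ℝ) ^ 2)

lemma barrier_le_one (N : ℕ) (z : ℤ × ℤ) : barrier N z ≤ 1 := min_le_left _ _

lemma barrier_nonneg (N : ℕ) {z : ℤ × ℤ} (hz : 0 ≤ z.2) : 0 ≤ barrier N z := by
  have hz' : (0 : ℝ) ≤ z.2 := mod_cast hz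
  have hheight : max ((N : ℝ) - z.2) 0 ^ 2 / (N : ℝ) ^ 2 ≤ 1 := by
    refine div_le_one_of_le₀ ?_ (sq_nonneg _)
    gcongr
    exact max_le (by linarith) N.cast_nonneg
  have hwidth : 0 ≤ (z.1 : ℝ) ^ 2 / (N : ℝ) ^ 2 := by positivity
  refine le_min zero_le_one ?_
  rw [sub_div]
  linarith

lemma barrier_eq_one {N : ℕ} {z : ℤ × ℤ} (h : N ≤ |z.1| + z.2) : barrier N z = 1 := by
  have h' : (N : ℝ) ≤ |(z.1 : ℝ)| + z.2 := mod_cast h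
  have hsq : max ((N : ℝ) - z.2) 0 ^ 2 ≤ (z.1 : ℝ) ^ 2 := by
    rw [← sq_abs (z.1 : ℝ)]
    gcongr
    exact max_le (by linarith) (abs_nonneg _)
  exact min_eq_left <| le_add_of_nonneg_right <| div_nonneg (sub_nonneg.2 hsq) (sq_nonneg _)

lemma abs_le_one_of_mem_dirs : ∀ d ∈ dirs, |d.1| ≤ 1 ∧ |d.2| ≤ 1 := by
  decide

lemma stepMean_barrier_le (N : ℕ) : stepMean (barrier N) ≤ barrier N := by
  intro z
  have hle_one : stepMean (barrier N) z ≤ 1 :=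
    (stepMean_apply_le fun d _ => barrier_le_one N (z + d)).trans_eq
      (congrFun (stepMean_const 1) z)
  rcases le_or_gt (N : ℤ) z.2 with hN | hN
  · exact hle_one.trans_eq (barrier_eq_one (hN.trans (le_add_of_nonneg_left (abs_nonneg _)))).symm
  · let q : ℤ × ℤ → ℝ := fun w => 1 + ((w.1 : ℝ) ^ 2 - ((N : ℝ) - w.2) ^ 2) / (N : ℝ) ^ 2
    have hq : ∀ d ∈ dirs, barrier N (z + d) ≤ q (z + d) := fun d hd => by
      have hd2 : (z + d).2 ≤ N := by
        have := (abs_le.1 (abs_le_one_of_mem_dirs d hd).2).2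
        rw [Prod.snd_add]
        lia
      have hd2' : (0 : ℝ) ≤ N - (z + d).2 := sub_nonneg.2 (mod_cast hd2)
      exact (min_le_right _ _).trans_eq (by rw [max_eq_left hd2'])
    have hN' : (0 : ℝ) ≤ N - z.2 := sub_nonneg.2 (mod_cast hN.le)
    refine le_min hle_one ?_
    rw [max_eq_left hN']
    refine (stepMean_apply_le hq).trans_eq ?_
    simp only [stepMean_apply_eq, q, Prod.fst_add, Prod.snd_add, Int.cast_add, Int.cast_one,
      Int.cast_zero, Int.cast_neg]
    ring

lemma mul_barrier_axis_le (N : ℕ) {y : ℤ} (hy : 0 ≤ y) : N * barrier N (0, y) ≤ 2 * y := by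
  have hy' : (0 : ℝ) ≤ y := mod_cast hy
  rcases le_or_gt (N : ℝ) y with hN | hN
  · calc N * barrier N (0, y) ≤ N := mul_le_of_le_one_right N.cast_nonneg (barrier_le_one _ _)
      _ ≤ 2 * y := by linarith
  · have hN0 : (0 : ℝ) < N := hy'.trans_lt hN
    have hle : barrier N (0, y) ≤ 1 + ((0 : ℝ) ^ 2 - ((N : ℝ) - y) ^ 2) / (N : ℝ) ^ 2 :=
      (min_le_right _ _).trans_eq (by simp only [max_eq_left (sub_nonneg.2 hN.le), Int.cast_zero])
    calc N * barrier N (0, y)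
        ≤ N * (1 + ((0 : ℝ) ^ 2 - ((N : ℝ) - y) ^ 2) / (N : ℝ) ^ 2) := by gcongr
      _ = 2 * y - (y : ℝ) ^ 2 / N := by field_simp; ring
      _ ≤ 2 * y := sub_le_self _ (by positivity)

/-- The superposition, with weights `ρ ^ k`, of the barriers at the dyadic scales `2 ^ k`, `k < K`.
For `ρ = 2 ^ p` it dominates `|x| ^ p / 2` in the range `|x| < 2 ^ K`. -/
noncomputable def barrierSum (ρ : ℝ) (K : ℕ) : ℤ × ℤ → ℝ :=
  ∑ k ∈ Finset.range K, ρ ^ k • barrier (2 ^ k)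

lemma barrierSum_apply (ρ : ℝ) (K : ℕ) (z : ℤ × ℤ) :
    barrierSum ρ K z = ∑ k ∈ Finset.range K, ρ ^ k * barrier (2 ^ k) z := by
  simp [barrierSum]

section BarrierSum

variable {ρ : ℝ}

lemma stepMean_barrierSum_le (hρ : 0 ≤ ρ) (K : ℕ) :
    stepMean (barrierSum ρ K) ≤ barrierSum ρ K := by
  simp only [barrierSum, map_sum, map_smul]
  exact Finset.sum_le_sum fun k _ =>
    smul_le_smul_of_nonneg_left (stepMean_barrier_le _) (pow_nonneg hρ k)

lemma pow_le_barrierSum (hρ : 0 ≤ ρ) {K k : ℕ} (hk : k < K) {z : ℤ × ℤ} (hz : 0 ≤ z.2)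
    (hx : 2 ^ k ≤ |z.1|) : ρ ^ k ≤ barrierSum ρ K z := by
  have hone : barrier (2 ^ k) z = 1 := barrier_eq_one (by push_cast; lia)
  rw [barrierSum_apply, ← mul_one (ρ ^ k), ← hone]
  exact Finset.single_le_sum (f := fun k => ρ ^ k * barrier (2 ^ k) z)
    (fun j _ => mul_nonneg (pow_nonneg hρ j) (barrier_nonneg _ hz)) (Finset.mem_range.2 hk)

lemma barrierSum_nonneg (hρ : 0 ≤ ρ) (K : ℕ) {z : ℤ × ℤ} (hz : 0 ≤ z.2) :
    0 ≤ barrierSum ρ K z := by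
  rw [barrierSum_apply]
  exact Finset.sum_nonneg fun k _ => mul_nonneg (pow_nonneg hρ k) (barrier_nonneg _ hz)

lemma pow_mul_barrier_axis_le (hρ : 0 ≤ ρ) (k : ℕ) {y : ℤ} (hy : 0 ≤ y) :
    ρ ^ k * barrier (2 ^ k) (0, y) ≤ 2 * y * (ρ / 2) ^ k := by
  calc ρ ^ k * barrier (2 ^ k) (0, y)
      = (ρ / 2) ^ k * ((2 ^ k : ℕ) * barrier (2 ^ k) (0, y)) := by
        rw [div_pow]; push_cast; field_simp
    _ ≤ (ρ / 2) ^ k * (2 * y) :=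
        mul_le_mul_of_nonneg_left (mul_barrier_axis_le _ hy) (by positivity)
    _ = 2 * y * (ρ / 2) ^ k := mul_comm _ _

lemma exists_forall_barrierSum_axis_le (hρ : 0 ≤ ρ) (hρ2 : ρ < 2) {ε : ℝ} (hε : 0 < ε) :
    ∃ C : ℝ, ∀ (K : ℕ) (y : ℤ), 0 ≤ y → barrierSum ρ K (0, y) ≤ C + ε * y := by
  have hsummable : Summable fun k : ℕ => (ρ / 2) ^ k :=
    summable_geometric_of_lt_one (by positivity) (by linarith)
  obtain ⟨J, hJ⟩ : ∃ J : ℕ, ∑' k, (ρ / 2) ^ (k + J) < ε / 2 :=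
    ((tendsto_sum_nat_add _).eventually_lt_const (half_pos hε)).exists
  refine ⟨∑ k ∈ Finset.range J, ρ ^ k, fun K y hy => ?_⟩
  have : (0 : ℝ) ≤ y := mod_cast hy
  have hlow : ∑ k ∈ Finset.range J, ρ ^ k * barrier (2 ^ k) (0, y) ≤ ∑ k ∈ Finset.range J, ρ ^ k :=
    Finset.sum_le_sum fun k _ => mul_le_of_le_one_right (pow_nonneg hρ k) (barrier_le_one _ _)
  have hhigh : ∑ k ∈ Finset.range K, ρ ^ (J + k) * barrier (2 ^ (J + k)) (0, y) ≤ ε * y := by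
    calc ∑ k ∈ Finset.range K, ρ ^ (J + k) * barrier (2 ^ (J + k)) (0, y)
        ≤ ∑ k ∈ Finset.range K, 2 * y * (ρ / 2) ^ (k + J) :=
          Finset.sum_le_sum fun k _ => add_comm J k ▸ pow_mul_barrier_axis_le hρ _ hy
      _ = 2 * y * ∑ k ∈ Finset.range K, (ρ / 2) ^ (k + J) := by rw [Finset.mul_sum]
      _ ≤ 2 * y * ∑' k, (ρ / 2) ^ (k + J) := by
          gcongr
          exact ((summable_nat_add_iff J).2 hsummable).sum_le_tsum _ fun k _ => by positivity
      _ ≤ 2 * y * (ε / 2) := by gcongr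
      _ = ε * y := by ring
  calc barrierSum ρ K (0, y) ≤ barrierSum ρ (J + K) (0, y) := by
        simp only [barrierSum_apply]
        refine Finset.sum_le_sum_of_subset_of_nonneg
          (Finset.range_mono (Nat.le_add_left K J)) fun k _ _ => ?_
        exact mul_nonneg (pow_nonneg hρ k) (barrier_nonneg _ hy)
    _ ≤ ∑ k ∈ Finset.range J, ρ ^ k + ε * y := by
        rw [barrierSum_apply, Finset.sum_range_add]
        exact add_le_add hlow hhigh

end BarrierSum

lemma abs_rpow_le_two_mul_barrierSum {p : ℝ} (hp0 : 0 < p) (hp1 : p ≤ 1) {K : ℕ} {z : ℤ × ℤ}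
    (hz : 0 ≤ z.2) (hx : |z.1| < 2 ^ K) : |(z.1 : ℝ)| ^ p ≤ 2 * barrierSum (2 ^ p) K z := by
  have hρ : (0 : ℝ) ≤ 2 ^ p := by positivity
  rcases eq_or_ne z.1 0 with h0 | h0
  · rw [h0, Int.cast_zero, abs_zero, Real.zero_rpow hp0.ne']
    exact mul_nonneg zero_le_two (barrierSum_nonneg hρ K hz)
  · set k := Nat.log 2 z.1.natAbs
    have hlow : (2 : ℤ) ^ k ≤ |z.1| := by
      rw [Int.abs_eq_natAbs]
      exact mod_cast Nat.pow_log_le_self 2 (Int.natAbs_ne_zero.2 h0)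
    have hhigh : |z.1| < 2 ^ (k + 1) := by
      rw [Int.abs_eq_natAbs]
      exact mod_cast Nat.lt_pow_succ_log_self one_lt_two z.1.natAbs
    have hkK : k < K := (pow_lt_pow_iff_right₀ one_lt_two).1 (hlow.trans_lt hx)
    have htwo : (2 : ℝ) ^ p ≤ 2 := by
      simpa using Real.rpow_le_rpow_of_exponent_le one_le_two hp1
    calc |(z.1 : ℝ)| ^ p ≤ ((2 : ℝ) ^ (k + 1)) ^ p := by
          gcongr
          exact mod_cast hhigh.le
      _ = 2 ^ p * (2 ^ p) ^ k := by rw [← Real.rpow_pow_comm zero_le_two, pow_succ']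
      _ ≤ 2 * barrierSum (2 ^ p) K z :=
          mul_le_mul htwo (pow_le_barrierSum hρ hkK hz hlow) (by positivity) zero_le_two

/-! ### The subharmonic minorant -/

/-- The discrete harmonic function `(2H²y + y³ - 3x²y) / (3H²)`. On the box `[-H, H] × [0, H]` it is
at most `y`, it is nonpositive on the vertical sides, and on the axis it is at least `2y / 3`. -/
noncomputable def cubicProfile (H : ℝ) (z : ℤ × ℤ) : ℝ :=
  (2 * H ^ 2 * z.2 + (z.2 : ℝ) ^ 3 - 3 * (z.1 : ℝ) ^ 2 * z.2) / (3 * H ^ 2)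

lemma stepMean_cubicProfile (H : ℝ) : stepMean (cubicProfile H) = cubicProfile H := by
  ext z
  simp only [stepMean_apply_eq, cubicProfile, Prod.fst_add, Prod.snd_add, Int.cast_add,
    Int.cast_one, Int.cast_zero, Int.cast_neg]
  ring

lemma cubicProfile_le {H : ℝ} (hH : 0 < H) {z : ℤ × ℤ} (hz : 0 ≤ z.2) (hzH : z.2 ≤ H) :
    cubicProfile H z ≤ z.2 * (1 - (z.1 : ℝ) ^ 2 / H ^ 2) := by
  have : (0 : ℝ) ≤ z.2 := mod_cast hz
  have hcube : (z.2 : ℝ) ^ 3 ≤ H ^ 2 * z.2 := by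
    rw [pow_succ]
    gcongr
  calc cubicProfile H z
      ≤ (2 * H ^ 2 * z.2 + H ^ 2 * z.2 - 3 * (z.1 : ℝ) ^ 2 * z.2) / (3 * H ^ 2) := by
        unfold cubicProfile
        gcongr
    _ = z.2 * (1 - (z.1 : ℝ) ^ 2 / H ^ 2) := by field_simp; ring

lemma le_cubicProfile_axis {H : ℝ} (hH : H ≠ 0) {y : ℤ} (hy : 0 ≤ y) :
    2 / 3 * y ≤ cubicProfile H (0, y) := by
  have : (0 : ℝ) ≤ y := mod_cast hy
  calc 2 / 3 * (y : ℝ) ≤ 2 / 3 * y + (y : ℝ) ^ 3 / (3 * H ^ 2) :=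
        le_add_of_nonneg_right (by positivity)
    _ = cubicProfile H (0, y) := by
        simp only [cubicProfile, Int.cast_zero]
        field_simp
        ring

/-- The subharmonic function compared with `H` times the probability of reaching the segment
`[-H, H] × {H}` before an obstacle below the curve `y = h + |x| ^ p`. The cutoff `K` only has to
satisfy `H < 2 ^ K`. -/
noncomputable def escapeMinorant (p h H : ℝ) (K : ℕ) : ℤ × ℤ → ℝ :=
  cubicProfile H - Function.const _ h - (2 : ℝ) • barrierSum (2 ^ p) K

lemma escapeMinorant_le_stepMean (p h H : ℝ) (K : ℕ) :
    escapeMinorant p h H K ≤ stepMean (escapeMinorant p h H K) := by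
  simp only [escapeMinorant, map_sub, map_smul, stepMean_cubicProfile, stepMean_const]
  exact sub_le_sub_left
    (smul_le_smul_of_nonneg_left (stepMean_barrierSum_le (by positivity) K) zero_le_two) _

lemma escapeMinorant_le {p h H : ℝ} (hp0 : 0 < p) (hp1 : p ≤ 1) (hH : 0 < H) {K : ℕ} {z : ℤ × ℤ}
    (hz : 0 ≤ z.2) (hzH : z.2 ≤ H) (hx : |z.1| < 2 ^ K) :
    escapeMinorant p h H K z ≤ z.2 * (1 - (z.1 : ℝ) ^ 2 / H ^ 2) - h - |(z.1 : ℝ)| ^ p :=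
  sub_le_sub (sub_le_sub_right (cubicProfile_le hH hz hzH) h)
    (abs_rpow_le_two_mul_barrierSum hp0 hp1 hz hx)

lemma exists_forall_le_escapeMinorant_axis {p : ℝ} (hp1 : p < 1) :
    ∃ C : ℝ, ∀ (h H : ℝ) (K : ℕ) (y : ℤ), H ≠ 0 → 0 ≤ y →
      y / 2 - h - C ≤ escapeMinorant p h H K (0, y) := by
  have hρ2 : (2 : ℝ) ^ p < 2 := by
    simpa using Real.rpow_lt_rpow_of_exponent_lt one_lt_two hp1
  obtain ⟨C, hC⟩ :=
    exists_forall_barrierSum_axis_le (by positivity) hρ2 (ε := 1 / 12) (by norm_num)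
  refine ⟨2 * C, fun h H K y hH hy => ?_⟩
  simp only [escapeMinorant, Pi.sub_apply, Pi.smul_apply, Function.const_apply, smul_eq_mul]
  linarith [hC K y hy, le_cubicProfile_axis hH hy]

section Comparison

variable {p h : ℝ} {A B : Set (ℤ × ℤ)} {H : ℤ} {K : ℕ}

lemma escapeMinorant_le_mul_hitBeforeProb_of_boundary (hp0 : 0 < p) (hp1 : p ≤ 1) (hh : 0 ≤ h)
    (hH : 0 < H) (hK : H < 2 ^ K) (hA : ∀ x, |x| ≤ H → (x, H) ∈ A)
    (hB : ∀ z ∈ B, 0 ≤ z.2 → (z.2 : ℝ) ≤ h + |(z.1 : ℝ)| ^ p)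
    {z : ℤ × ℤ} (hx : |z.1| ≤ H) (hy0 : 0 ≤ z.2) (hyH : z.2 ≤ H)
    (hz : z ∈ A ∨ z ∈ B ∨ |z.1| = H ∨ z.2 = 0 ∨ z.2 = H) :
    escapeMinorant p h H K z ≤ H * hitBeforeProb z A B := by
  have hH' : (0 : ℝ) < H := mod_cast hH
  have hy0' : (0 : ℝ) ≤ z.2 := mod_cast hy0
  have hyH' : (z.2 : ℝ) ≤ H := mod_cast hyH
  have hcurve : 0 ≤ h + |(z.1 : ℝ)| ^ p := by positivity
  have hhit : 0 ≤ H * hitBeforeProb z A B := mul_nonneg hH'.le (hitBeforeProb_nonneg A B z)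
  have hprofile := escapeMinorant_le (h := h) hp0 hp1 hH' hy0 hyH' (hx.trans_lt hK)
  have hheight : z.2 * (1 - (z.1 : ℝ) ^ 2 / (H : ℝ) ^ 2) ≤ z.2 :=
    mul_le_of_le_one_right hy0' (sub_le_self _ (by positivity))
  by_cases hzB : z ∈ B
  · linarith [hB z hzB hy0]
  by_cases hzA : z ∈ A
  · rw [hitBeforeProb_of_mem hzA hzB]
    linarith
  obtain hside | hbot | htop := (hz.resolve_left hzA).resolve_left hzB
  · have hsq : (z.1 : ℝ) ^ 2 = (H : ℝ) ^ 2 := by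
      rw [← sq_abs (z.1 : ℝ)]
      exact mod_cast congrArg (· ^ 2) hside
    rw [hsq, div_self (by positivity), sub_self, mul_zero] at hprofile
    linarith
  · rw [hbot, Int.cast_zero, zero_mul] at hprofile
    linarith
  · exact absurd (by simpa only [← htop] using hA z.1 (htop ▸ hx)) hzA

lemma escapeMinorant_le_mul_hitBeforeProb (hp0 : 0 < p) (hp1 : p ≤ 1) (hh : 0 ≤ h)
    (hH : 0 < H) (hK : H < 2 ^ K) (hA : ∀ x, |x| ≤ H → (x, H) ∈ A)
    (hB : ∀ z ∈ B, 0 ≤ z.2 → (z.2 : ℝ) ≤ h + |(z.1 : ℝ)| ^ p)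
    {z : ℤ × ℤ} (hx : |z.1| ≤ H) (hy0 : 0 ≤ z.2) (hyH : z.2 ≤ H) :
    escapeMinorant p h H K z ≤ H * hitBeforeProb z A B := by
  classical
  let D := {z ∈ Finset.Ioo (-H) H ×ˢ Finset.Ioo 0 H | z ∉ A ∧ z ∉ B}
  have hD (w : ℤ × ℤ) : w ∈ D ↔ (|w.1| < H ∧ 0 < w.2 ∧ w.2 < H) ∧ w ∉ A ∧ w ∉ B := by
    simp only [D, Finset.mem_filter, Finset.mem_product, Finset.mem_Ioo, abs_lt]
  have hboundary (w : ℤ × ℤ) (hw : w ∉ D) (hx : |w.1| ≤ H) (hy0 : 0 ≤ w.2) (hyH : w.2 ≤ H) :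
      escapeMinorant p h H K w ≤ H * hitBeforeProb w A B := by
    refine escapeMinorant_le_mul_hitBeforeProb_of_boundary hp0 hp1 hh hH hK hA hB hx hy0 hyH ?_
    rw [hD] at hw
    grind
  by_cases hzD : z ∈ D
  · refine le_of_le_stepMean_of_stepMean_le (u := (H : ℝ) • fun w => hitBeforeProb w A B)
      (fun w _ => escapeMinorant_le_stepMean p h H K w) (fun w hw => ?_) (fun w hw d hd hwd => ?_)
      z hzD
    · obtain ⟨hwA, hwB⟩ := ((hD w).1 hw).2
      rw [map_smul, Pi.smul_apply, stepMean_hitBeforeProb hwA hwB, Pi.smul_apply]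
    · obtain ⟨hwx, hwy0, hwyH⟩ := ((hD w).1 hw).1
      obtain ⟨hd1, hd2⟩ := abs_le_one_of_mem_dirs d hd
      rw [abs_le] at hd2
      exact hboundary (w + d) hwd ((abs_add_le _ _).trans (by lia)) (by rw [Prod.snd_add]; lia)
        (by rw [Prod.snd_add]; lia)
  · exact hboundary z hzD hx hy0 hyH

theorem exists_forall_div_le_hitBeforeProb (hp0 : 0 < p) (hp1 : p < 1) (hh : 0 ≤ h) :
    ∃ M₀ : ℤ, ∀ (A B : Set (ℤ × ℤ)) (M H : ℤ), M₀ ≤ M → M ≤ H →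
      (∀ x, |x| ≤ H → (x, H) ∈ A) → (∀ z ∈ B, 0 ≤ z.2 → (z.2 : ℝ) ≤ h + |(z.1 : ℝ)| ^ p) →
      (M : ℝ) / (4 * H) ≤ hitBeforeProb (0, M) A B := by
  obtain ⟨C, hC⟩ := exists_forall_le_escapeMinorant_axis hp1
  refine ⟨max 1 ⌈4 * (h + C)⌉, fun A B M H hM hMH hA hB => ?_⟩
  obtain ⟨hM1, hMC⟩ := max_le_iff.1 hM
  have hH : (0 : ℝ) < H := mod_cast (zero_lt_one.trans_le hM1).trans_le hMH
  have hK : H < 2 ^ H.toNat :=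
    (Int.self_le_toNat H).trans_lt (mod_cast Nat.lt_two_pow_self)
  have hM0 : 0 ≤ M := zero_le_one.trans hM1
  have hcompare : escapeMinorant p h H H.toNat (0, M) ≤ H * hitBeforeProb (0, M) A B :=
    escapeMinorant_le_mul_hitBeforeProb hp0 hp1.le hh (mod_cast hH) hK hA hB
      (by simpa using hM0.trans hMH) hM0 hMH
  rw [div_le_iff₀ (by positivity)]
  linarith [hC h H H.toNat M hH.ne' hM0, Int.ceil_le.1 hMC]

end Comparison

/-! ### Escape from `Ŵ` -/

section Escape

variable {α γ : ℝ} {h₀ : ℤ} {k₀ : ℕ}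

lemma snd_le_of_mem_What (hh₀ : 0 ≤ h₀) {z : ℤ × ℤ} (hz : z ∈ What α h₀) :
    (z.2 : ℝ) ≤ h₀ + |(z.1 : ℝ)| ^ (1 / α) := by
  have hh₀' : (0 : ℝ) ≤ h₀ := mod_cast hh₀
  obtain ⟨-, -, hbox⟩ | ⟨-, -, hcurve⟩ := hz
  · have hbox' : (z.2 : ℝ) ≤ h₀ := mod_cast hbox
    linarith [Real.rpow_nonneg (abs_nonneg (z.1 : ℝ)) (1 / α)]
  · linarith

lemma axis_notMem_What (hα : α ≠ 0) (hh₀ : 0 ≤ h₀) {y : ℤ} (hy : h₀ < y) :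
    ((0 : ℤ), y) ∉ What α h₀ := fun hmem => by
  have hle := snd_le_of_mem_What hh₀ hmem
  rw [Int.cast_zero, abs_zero, Real.zero_rpow (one_div_ne_zero hα), add_zero, Int.cast_le] at hle
  exact hle.not_gt hy

lemma axis_mem_midSec (γ : ℝ) (k₀ i : ℕ) : ((0 : ℤ), (2 : ℤ) ^ (k₀ + i)) ∈ midSec γ k₀ i := by
  refine ⟨rfl, ?_⟩
  rw [Int.cast_zero, abs_zero]
  positivity

lemma mem_midSec_of_abs_le (hγ : 0 ≤ γ) {i : ℕ} (hi : i ≠ 0) {x : ℤ}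
    (hx : |x| ≤ 2 ^ (k₀ + i)) : (x, (2 : ℤ) ^ (k₀ + i)) ∈ midSec γ k₀ i := by
  refine ⟨rfl, ?_⟩
  calc |(x : ℝ)| ≤ (2 : ℝ) ^ (k₀ + i) := mod_cast hx
    _ = (2 : ℝ) ^ ((k₀ + i : ℕ) : ℝ) := (Real.rpow_natCast _ _).symm
    _ ≤ (2 : ℝ) ^ ((1 + γ) * ((k₀ + i : ℕ) : ℝ)) :=
        Real.rpow_le_rpow_of_exponent_le one_le_two
          (le_mul_of_one_le_left (Nat.cast_nonneg _) (le_add_of_nonneg_right hγ))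
    _ ≤ ∑ j ∈ Finset.Icc 1 i, (2 : ℝ) ^ ((1 + γ) * ((k₀ + j : ℕ) : ℝ)) :=
        Finset.single_le_sum (f := fun j : ℕ => (2 : ℝ) ^ ((1 + γ) * ((k₀ + j : ℕ) : ℝ)))
          (fun j _ => by positivity) (Finset.mem_Icc.2 ⟨Nat.one_le_iff_ne_zero.2 hi, le_rfl⟩)

lemma exists_forall_div_le_hitBeforeProb_midSec (hα : 1 < α) (hγ : 0 ≤ γ) (hh₀ : 0 ≤ h₀)
    (hk₀ : h₀ < 2 ^ k₀) :
    ∃ M : ℤ, ∀ i, ∃ y, h₀ < y ∧ y ≤ M ∧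
      1 / (4 * 2 ^ (k₀ + i)) ≤ hitBeforeProb (0, y) (midSec γ k₀ i) (What α h₀) := by
  obtain ⟨M₀, hM₀⟩ := exists_forall_div_le_hitBeforeProb (p := 1 / α) (h := h₀) (by positivity)
    ((div_lt_one (by positivity)).2 hα) (mod_cast hh₀)
  refine ⟨max M₀ (2 ^ k₀), fun i => ?_⟩
  rcases le_or_gt (2 ^ (k₀ + i)) (max M₀ (2 ^ k₀)) with hle | hlt
  · have hy : h₀ < 2 ^ (k₀ + i) :=
      hk₀.trans_le (pow_le_pow_right₀ one_le_two (Nat.le_add_right k₀ i))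
    refine ⟨2 ^ (k₀ + i), hy, hle, ?_⟩
    rw [hitBeforeProb_of_mem (axis_mem_midSec γ k₀ i) (axis_notMem_What (by positivity) hh₀ hy)]
    refine div_le_one_of_le₀ ?_ (by positivity)
    linarith [one_le_pow₀ (n := k₀ + i) (one_le_two (α := ℝ))]
  · have hi : i ≠ 0 := by
      rintro rfl
      exact (le_max_right M₀ (2 ^ k₀)).not_gt hlt
    have hM1 : (1 : ℝ) ≤ (max M₀ (2 ^ k₀) : ℤ) :=
      mod_cast (one_le_pow₀ one_le_two).trans (le_max_right M₀ (2 ^ k₀))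
    refine ⟨max M₀ (2 ^ k₀), hk₀.trans_le (le_max_right _ _), le_rfl, ?_⟩
    calc (1 : ℝ) / (4 * 2 ^ (k₀ + i))
        ≤ (max M₀ (2 ^ k₀) : ℤ) / (4 * ((2 ^ (k₀ + i) : ℤ) : ℝ)) := by
          push_cast at hM1 ⊢
          gcongr
      _ ≤ hitBeforeProb (0, max M₀ (2 ^ k₀)) (midSec γ k₀ i) (What α h₀) :=
          hM₀ _ _ _ _ (le_max_left _ _) hlt.le (fun x => mem_midSec_of_abs_le hγ hi)
            fun z hz _ => snd_le_of_mem_What hh₀ hz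

lemma hitBeforeProb_axis_div_le_exitBeforeProb (hα : α ≠ 0) (hh₀ : 0 ≤ h₀) (A : Set (ℤ × ℤ))
    {y : ℤ} (hy : h₀ < y) :
    hitBeforeProb (0, y) A (What α h₀) / 4 ^ (y - h₀).toNat ≤
      exitBeforeProb ((0 : ℤ), h₀) A (What α h₀) := by
  have hclimb (m : ℕ) : ((0 : ℤ), h₀) + m • ((0 : ℤ), (1 : ℤ)) = (0, h₀ + m) := by simp
  have htop : ((0 : ℤ), h₀) + (y - h₀).toNat • ((0 : ℤ), (1 : ℤ)) = (0, y) := by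
    rw [hclimb, Int.toNat_of_nonneg (sub_nonneg.2 hy.le), add_sub_cancel]
  rw [← htop]
  refine hitBeforeProb_add_nsmul_div_le_exitBeforeProb (by simp [dirs]) (by lia) fun m hm _ => ?_
  rw [hclimb]
  exact axis_notMem_What hα hh₀ (by lia)

theorem escape_prob_lower_bound_general (hα : 1 < α) (hγ : 0 ≤ γ) (hh₀ : 0 ≤ h₀)
    (hk₀ : h₀ < 2 ^ k₀) :
    ∃ c : ℝ, 0 < c ∧ ∀ i : ℕ,
      c / 2 ^ (k₀ + i) ≤ exitBeforeProb ((0 : ℤ), h₀) (midSec γ k₀ i) (What α h₀) := by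
  obtain ⟨M, hM⟩ := exists_forall_div_le_hitBeforeProb_midSec hα hγ hh₀ hk₀
  refine ⟨1 / (4 * 4 ^ (M - h₀).toNat), by positivity, fun i => ?_⟩
  obtain ⟨y, hy, hyM, hhit⟩ := hM i
  calc 1 / (4 * 4 ^ (M - h₀).toNat) / 2 ^ (k₀ + i)
      = 1 / (4 * 2 ^ (k₀ + i)) / (4 : ℝ) ^ (M - h₀).toNat := by field_simp
    _ ≤ hitBeforeProb (0, y) (midSec γ k₀ i) (What α h₀) / 4 ^ (y - h₀).toNat :=
        div_le_div₀ (hitBeforeProb_nonneg _ _ _) hhit (by positivity)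
          (pow_le_pow_right₀ (by norm_num) (Int.toNat_le_toNat (sub_le_sub_right hyM h₀)))
    _ ≤ exitBeforeProb ((0 : ℤ), h₀) (midSec γ k₀ i) (What α h₀) :=
        hitBeforeProb_axis_div_le_exitBeforeProb (by positivity) hh₀ _ hy

lemma lt_two_pow_of_two_mul_lt_rpow {β : ℝ} (hβ : β ≤ 1) (hh₀ : 0 ≤ h₀) {m : ℕ} (hm : m ≤ k₀)
    (h : 2 * (h₀ : ℝ) < 2 ^ (β * m)) : h₀ < 2 ^ k₀ := by
  have hh₀' : (0 : ℝ) ≤ h₀ := mod_cast hh₀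
  have hlt : (h₀ : ℝ) < 2 ^ k₀ :=
    calc (h₀ : ℝ) ≤ 2 * h₀ := by linarith
      _ < 2 ^ (β * m) := h
      _ ≤ 2 ^ (k₀ : ℝ) := by
          refine Real.rpow_le_rpow_of_exponent_le one_le_two ?_
          exact (mul_le_of_le_one_left m.cast_nonneg hβ).trans (mod_cast hm)
      _ = 2 ^ k₀ := Real.rpow_natCast _ _
  exact mod_cast hlt

end Escape

/-- **Lower bound for the escape probabilities.** Let `α > 1` with `α ∉ ℚ ∪ ℚ₂`, `h₀ ≥ 1`
an integer, `Ŵ` and `ξ₀ = (0, h₀)` as above, `β = 4/(α+3)`, `γ = 2(α−1)/(α+3)`,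
`α₁ = β + γ`, `k₀ = max(min{k : 2^{βk} > 2h₀}, 2⌈(α+3)/(α−1)⌉, ⌈3/(α₁−1)⌉)` and
`k_i = k₀ + i`.  Then there is a constant `c > 0` such that for every `i ≥ 0` the walk
started at `ξ₀` satisfies `P_{ξ₀}(τ_{s_i} < τ_{Ŵ}) ≥ c·2^{−k_i}`. -/
theorem escape_prob_lower_bound (α β γ α₁ : ℝ) (hα : 1 < α)
    (hirr : Irrational α) (hQ2 : α ∉ Q2)
    (hβ : β = 4 / (α + 3)) (hγ : γ = 2 * (α - 1) / (α + 3)) (hα₁ : α₁ = β + γ)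
    (h₀ : ℤ) (hh₀ : 1 ≤ h₀)
    (kmin : ℕ) (hkmin : IsLeast {k : ℕ | 2 * (h₀ : ℝ) < (2 : ℝ) ^ (β * k)} kmin)
    (k₀ : ℕ) (hk₀ : k₀ = max kmin (max (2 * ⌈(α + 3) / (α - 1)⌉₊) ⌈3 / (α₁ - 1)⌉₊)) :
    ∃ c : ℝ, 0 < c ∧ ∀ i : ℕ,
      c / 2 ^ (k₀ + i) ≤ exitBeforeProb ((0 : ℤ), h₀) (midSec γ k₀ i) (What α h₀) := by
  have hγ0 : 0 ≤ γ := hγ ▸ div_nonneg (by linarith) (by linarith)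
  have hβ1 : β ≤ 1 := hβ ▸ div_le_one_of_le₀ (by linarith) (by linarith)
  exact escape_prob_lower_bound_general hα hγ0 (by lia) <|
    lt_two_pow_of_two_mul_lt_rpow hβ1 (by lia) (hk₀ ▸ le_max_left _ _) hkmin.1

end SHM
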